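/- arXiv:2410.02418 — 2 statements merged into one kernel-verified Lean document; each statement's English description precedes it below -/
import Mathlib

section
/- Let x ∈ ℤ[ω], ω = e^{2πi/3}, and let a word w over D = {0, ±1, ±ω, ±ω²} be a concatenation w = u_1 u_2 ⋯ u_n of blocks u_ℓ from the set C = {0} ∪ {0d : d ∈ D, d ≠ 0} such that w, read as a digit string (most significant digit first), is a (β, D)-representation of x in base β = ω − 1. Let d_ℓ ∈ D be the last digit of the block u_ℓ. Then the number of optimal representations of x equals e A_{d_1} A_{d_2} ⋯ A_{d_n} eᵀ, where e = (1, 0, 0, 0, 0, 0, 0) ∈ ℤ^{1×7}. -/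
/-!
Let `N(x, k)` be the number of normalized representations of `x` of weight `k`. Splitting off the
least significant digit gives `N(β y, k) = N(y, k)`, and, since the digits congruent to a unit `μ`
modulo `β` are `μ, μ ω, μ ω²`,
`N(μ + β y, k) = N(y, k - 1) + N(y - μ, k - 1) + N(y + μ ω², k - 1)`.

Attach to `x` and `m` the row `(N(x, m), N(x - λ^0, m - 1), …, N(x - λ^5, m - 1))`. If the rows of
`x` vanish in all weights below `m`, the recursion turns the row of `x` in weight `m` into that of
`β x` in weight `m` by the matrix `A_0`, and into that of `1 + β² x` in weight `m + 1` by the matrix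
`A_1`. Since this applies to lower weights as well, the new rows again vanish below the new weight.
Multiplication by `λ` permutes the digits, so it acts on rows by `R`, and dividing by `λ^k` reduces
the digit `λ^k` to the digit `1`, at the price of conjugating `A_1` by `R^k`. The row obtained from
the whole word belongs to the weight of that word; no representation has smaller weight, so the
first entry of the row counts the optimal representations.
-/

open Matrix

noncomputable section

/-- The primitive cube root of unity `ω = exp(2πi/3)`. -/
def ω : ℂ := Complex.exp (2 * Real.pi * Complex.I / 3)

/-- The base `β = ω - 1`. -/
def eβ : ℂ := ω - 1

/-- The digit set `D = {0, ±1, ±ω, ±ω²}`. -/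
def eD : Set ℂ := {0, 1, -1, ω, -ω, ω ^ 2, -ω ^ 2}

/-- The ring of Eisenstein integers `ℤ[ω]`, as a subset of `ℂ`. -/
def EisZ : Set ℂ := {x | ∃ a b : ℤ, x = (a : ℂ) + (b : ℂ) * ω}

/-- Value of a digit string `d_{n-1} ⋯ d_0`, given as a list with the least
significant digit first: `eval [d_0, d_1, …, d_{n-1}] = Σ d_j β^j`. -/
def evalE (l : List ℂ) : ℂ :=
  l.foldr (fun d acc => d + eβ * acc) 0

/-- `l` (least significant digit first) is a `(β, D)`-representation of `x`. -/
def eIsRep (x : ℂ) (l : List ℂ) : Prop :=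
  (∀ d ∈ l, d ∈ eD) ∧ evalE l = x

/-- A representation is normalized if it is empty or its leading digit
(the last entry of the LSD-first list) is nonzero. -/
def eNormalized (l : List ℂ) : Prop := l.getLast? ≠ some 0

open scoped Classical in
/-- Number of nonzero digits (Hamming weight). -/
def eweight (l : List ℂ) : ℕ := (l.filter (fun d => d ≠ 0)).length

/-- A representation of `x` is optimal if it is normalized and its number of
nonzero digits is minimal among all representations of `x`. -/
def eOptimal (x : ℂ) (l : List ℂ) : Prop :=
  eIsRep x l ∧ eNormalized l ∧ ∀ l' : List ℂ, eIsRep x l' → eweight l ≤ eweight l'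

/-- The number of optimal representations of `x`. -/
def enumOpt (x : ℂ) : ℕ := Nat.card {l : List ℂ // eOptimal x l}

/-- The row vector `e = (1,0,0,0,0,0,0)`. -/
def e7 : Matrix (Fin 1) (Fin 7) ℤ := !![1,0,0,0,0,0,0]

/-- The permutation matrix `R` fixing coordinate 1 and cyclically permuting
coordinates 2,…,7. -/
def R7 : Matrix (Fin 7) (Fin 7) ℤ :=
  !![1,0,0,0,0,0,0;
     0,0,1,0,0,0,0;
     0,0,0,1,0,0,0;
     0,0,0,0,1,0,0;
     0,0,0,0,0,1,0;
     0,0,0,0,0,0,1;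
     0,1,0,0,0,0,0]

/-- The matrix `A_0`. -/
def E0 : Matrix (Fin 7) (Fin 7) ℤ :=
  !![1,0,0,0,0,0,0;
     0,0,0,0,0,0,0;
     0,0,0,0,0,0,0;
     0,0,0,0,0,0,0;
     0,0,0,0,0,0,0;
     0,0,0,0,0,0,0;
     0,0,0,0,0,0,0]

/-- The matrix `A_1`. -/
def E1 : Matrix (Fin 7) (Fin 7) ℤ :=
  !![1,1,0,0,0,0,0;
     0,0,0,0,0,0,0;
     0,0,0,0,0,0,0;
     0,0,0,0,0,0,0;
     1,0,0,1,0,0,0;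
     2,0,0,1,1,1,0;
     1,0,0,0,0,1,0]

/-- The matrix `A_{-1} = (Rᵀ)³ A_1 R³`. -/
def Em1 : Matrix (Fin 7) (Fin 7) ℤ := (R7ᵀ) ^ 3 * E1 * R7 ^ 3

open scoped Classical in
/-- The matrix `A_d` associated with a digit `d ∈ D`, where
`A_{λ^k} = (Rᵀ)^k A_1 R^k` for `λ = -ω²`. -/
def AmatE (d : ℂ) : Matrix (Fin 7) (Fin 7) ℤ :=
  if d = 0 then E0
  else if d = 1 then E1
  else if d = -ω ^ 2 then (R7ᵀ) ^ 1 * E1 * R7 ^ 1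
  else if d = ω then (R7ᵀ) ^ 2 * E1 * R7 ^ 2
  else if d = -1 then (R7ᵀ) ^ 3 * E1 * R7 ^ 3
  else if d = ω ^ 2 then (R7ᵀ) ^ 4 * E1 * R7 ^ 4
  else (R7ᵀ) ^ 5 * E1 * R7 ^ 5

/-! ### Arithmetic in the Eisenstein integers -/

lemma isPrimitiveRoot_omega : IsPrimitiveRoot ω 3 :=
  Complex.isPrimitiveRoot_exp 3 three_ne_zero

lemma omega_sq : ω ^ 2 = -1 - ω := by
  have h := isPrimitiveRoot_omega.geom_sum_eq_zero (by norm_num)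
  simp only [Finset.sum_range_succ, Finset.sum_range_zero] at h
  linear_combination h

/-- The primitive sixth root of unity `λ = e^{πi/3}`, whose powers are the nonzero digits. -/
def lam : ℂ := Complex.exp (2 * Real.pi * Complex.I / 6)

lemma isPrimitiveRoot_lam : IsPrimitiveRoot lam 6 :=
  Complex.isPrimitiveRoot_exp 6 (by norm_num)

lemma lam_sq : lam ^ 2 = ω := by
  rw [lam, ω, ← Complex.exp_nat_mul]
  congr 1
  push_cast
  ring

lemma lam_pow_three : lam ^ 3 = -1 := by
  rw [lam, ← Complex.exp_nat_mul, ← Complex.exp_pi_mul_I]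
  congr 1
  push_cast
  ring

lemma lam_eq : lam = -ω ^ 2 := by
  linear_combination lam * lam_pow_three - (lam ^ 2 + ω) * lam_sq

lemma lam_pow_four : lam ^ 4 = ω ^ 2 := by
  grind [lam_sq]

lemma lam_pow_five : lam ^ 5 = -ω := by
  grind [lam_sq, lam_pow_three]

lemma mem_eD_iff {d : ℂ} : d ∈ eD ↔ d = 0 ∨ d ^ 6 = 1 := by
  constructor
  · simp only [eD, Set.mem_insert_iff, Set.mem_singleton_iff]
    have := isPrimitiveRoot_omega.pow_eq_one
    grind
  · rintro (rfl | h)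
    · simp [eD]
    · obtain ⟨j, hj, rfl⟩ := isPrimitiveRoot_lam.eq_pow_of_pow_eq_one h
      interval_cases j
      · simp [eD]
      · simp [eD, lam_eq]
      · simp [eD, lam_sq]
      · simp [eD, lam_pow_three]
      · simp [eD, lam_pow_four]
      · simp [eD, lam_pow_five]

/-- The Eisenstein integers as a subring of `ℂ`. -/
def eisensteinSubring : Subring ℂ where
  carrier := EisZ
  zero_mem' := ⟨0, 0, by simp⟩
  one_mem' := ⟨1, 0, by simp⟩
  add_mem' := by
    rintro _ _ ⟨a, b, rfl⟩ ⟨c, d, rfl⟩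
    exact ⟨a + c, b + d, by push_cast; ring⟩
  neg_mem' := by
    rintro _ ⟨a, b, rfl⟩
    exact ⟨-a, -b, by push_cast; ring⟩
  mul_mem' := by
    rintro _ _ ⟨a, b, rfl⟩ ⟨c, d, rfl⟩
    exact ⟨a * c - b * d, a * d + b * c - b * d, by
      push_cast
      linear_combination (b * d : ℂ) * omega_sq⟩

lemma omega_mem : ω ∈ eisensteinSubring := ⟨0, 1, by simp⟩

lemma beta_mem : eβ ∈ eisensteinSubring := sub_mem omega_mem (one_mem _)

lemma mem_eisensteinSubring_of_pow_six {u : ℂ} (hu : u ^ 6 = 1) : u ∈ eisensteinSubring := by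
  obtain ⟨j, -, rfl⟩ := isPrimitiveRoot_lam.eq_pow_of_pow_eq_one hu
  rw [lam_eq]
  exact pow_mem (neg_mem (pow_mem omega_mem 2)) j

lemma mem_eisensteinSubring_of_mem_eD {d : ℂ} (hd : d ∈ eD) : d ∈ eisensteinSubring := by
  rcases mem_eD_iff.1 hd with rfl | h
  · exact zero_mem _
  · exact mem_eisensteinSubring_of_pow_six h

lemma beta_ne_zero : eβ ≠ 0 :=
  sub_ne_zero.2 (isPrimitiveRoot_omega.ne_one (by norm_num))

lemma eq_zero_of_add_mul_omega_eq_zero {a b : ℤ} (h : (a : ℂ) + b * ω = 0) : a = 0 ∧ b = 0 := by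
  have norm_eq_zero : a ^ 2 - a * b + b ^ 2 = 0 := by
    have : (a ^ 2 - a * b + b ^ 2 : ℂ) = 0 := by
      linear_combination ((a : ℂ) - b - b * ω) * h + (b : ℂ) ^ 2 * omega_sq
    exact_mod_cast this
  constructor <;> nlinarith [sq_nonneg (a - 2 * b), sq_nonneg (2 * a - b)]

lemma three_dvd_of_eq_beta_mul {n : ℤ} {z : ℂ} (hz : z ∈ eisensteinSubring)
    (h : (n : ℂ) = eβ * z) : 3 ∣ n := by
  obtain ⟨a, b, rfl⟩ := hz
  have coords : ((n + a + b : ℤ) : ℂ) + (2 * b - a : ℤ) * ω = 0 := by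
    rw [eβ] at h
    push_cast
    linear_combination h + (b : ℂ) * omega_sq
  have := eq_zero_of_add_mul_omega_eq_zero coords
  omega

lemma exists_int_eq_pow_three {d : ℂ} (hd : d ∈ eD) : ∃ n : ℤ, |n| ≤ 1 ∧ d ^ 3 = n := by
  rcases mem_eD_iff.1 hd with rfl | h
  · exact ⟨0, by simp⟩
  · have : (d ^ 3) ^ 2 = 1 := by rw [← pow_mul, h]
    rcases sq_eq_one_iff.1 this with h | h
    · exact ⟨1, by simp [h]⟩
    · exact ⟨-1, by simp [h]⟩

/-- The cubes of the digits are `0`, `1` and `-1`, which are pairwise incongruent modulo `β`. -/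
lemma pow_three_eq_of_sub_eq_beta_mul {d e z : ℂ} (hd : d ∈ eD) (he : e ∈ eD)
    (hz : z ∈ eisensteinSubring) (h : d - e = eβ * z) : d ^ 3 = e ^ 3 := by
  obtain ⟨m, hm, hdm⟩ := exists_int_eq_pow_three hd
  obtain ⟨n, hn, hen⟩ := exists_int_eq_pow_three he
  have hd' := mem_eisensteinSubring_of_mem_eD hd
  have he' := mem_eisensteinSubring_of_mem_eD he
  have hdvd : 3 ∣ m - n := by
    refine three_dvd_of_eq_beta_mul (z := z * (d ^ 2 + d * e + e ^ 2)) (by aesop) ?_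
    push_cast
    linear_combination (d ^ 2 + d * e + e ^ 2) * h - hdm + hen
  rw [hdm, hen, show m = n by grind]

lemma eq_or_eq_mul_omega_of_pow_three_eq {d μ : ℂ} (h : d ^ 3 = μ ^ 3) :
    d = μ ∨ d = μ * ω ∨ d = μ * ω ^ 2 := by
  have factored : (d - μ) * ((d - μ * ω) * (d - μ * ω ^ 2)) = 0 := by
    grind [omega_sq]
  simpa only [mul_eq_zero, sub_eq_zero] using factored

/-! ### Counting normalized representations of a given weight -/

/-- The normalized representations of `x` of weight `k`. The weight is an integer, so that
`k - 1` is meaningful for all `k`; the set is empty for `k < 0`. -/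
def repSet (x : ℂ) (k : ℤ) : Set (List ℂ) :=
  {l | eIsRep x l ∧ eNormalized l ∧ (eweight l : ℤ) = k}

lemma evalE_cons (d : ℂ) (l : List ℂ) : evalE (d :: l) = d + eβ * evalE l := rfl

lemma evalE_mem {l : List ℂ} (h : ∀ d ∈ l, d ∈ eD) : evalE l ∈ eisensteinSubring := by
  induction l with
  | nil => exact zero_mem _
  | cons d l ih =>
    rw [List.forall_mem_cons] at h
    exact add_mem (mem_eisensteinSubring_of_mem_eD h.1) (mul_mem beta_mem (ih h.2))

lemma eweight_cons_zero (l : List ℂ) : eweight (0 :: l) = eweight l := by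
  simp [eweight]

lemma eweight_cons_of_ne_zero {d : ℂ} (hd : d ≠ 0) (l : List ℂ) :
    eweight (d :: l) = eweight l + 1 := by
  simp [eweight, hd]

lemma eNormalized_cons {d : ℂ} {l : List ℂ} :
    eNormalized (d :: l) ↔ eNormalized l ∧ (l = [] → d ≠ 0) := by
  cases l <;> simp [eNormalized]

lemma ne_zero_of_pow_six {u : ℂ} (hu : u ^ 6 = 1) : u ≠ 0 := by
  rintro rfl
  norm_num at hu

lemma cons_zero_mem_repSet_iff {y : ℂ} (hy : y ≠ 0) {k : ℤ} {l : List ℂ} :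
    0 :: l ∈ repSet (eβ * y) k ↔ l ∈ repSet y k := by
  have hnil : evalE l = y → l ≠ [] := by
    rintro rfl rfl
    exact hy rfl
  simp only [repSet, Set.mem_ofPred_eq, eIsRep, evalE_cons, eNormalized_cons, eweight_cons_zero,
    List.forall_mem_cons, mem_eD_iff, zero_add, mul_right_inj' beta_ne_zero]
  tauto

lemma cons_mem_repSet_iff {d y : ℂ} (hd : d ^ 6 = 1) {k : ℤ} {l : List ℂ} :
    d :: l ∈ repSet (d + eβ * y) k ↔ l ∈ repSet y (k - 1) := by
  have hd0 := ne_zero_of_pow_six hd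
  simp only [repSet, Set.mem_ofPred_eq, eIsRep, evalE_cons, eNormalized_cons,
    eweight_cons_of_ne_zero hd0, List.forall_mem_cons, mem_eD_iff, hd, add_right_inj,
    mul_right_inj' beta_ne_zero, Nat.cast_add, Nat.cast_one, eq_sub_iff_add_eq]
  tauto

lemma pow_three_eq_of_cons_mem_repSet {d e y : ℂ} (he : e ∈ eD) (hy : y ∈ eisensteinSubring)
    {k : ℤ} {l : List ℂ} (hl : d :: l ∈ repSet (e + eβ * y) k) : d ^ 3 = e ^ 3 := by
  obtain ⟨⟨hdigits, heval⟩, -⟩ := hl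
  rw [List.forall_mem_cons] at hdigits
  rw [evalE_cons] at heval
  exact pow_three_eq_of_sub_eq_beta_mul hdigits.1 he (sub_mem hy (evalE_mem hdigits.2))
    (by linear_combination heval)

lemma eq_zero_of_cons_mem_repSet {d y : ℂ} (hy : y ∈ eisensteinSubring) {k : ℤ} {l : List ℂ}
    (hl : d :: l ∈ repSet (eβ * y) k) : d = 0 := by
  rw [← zero_add (eβ * y)] at hl
  simpa using pow_three_eq_of_cons_mem_repSet (mem_eD_iff.2 (Or.inl rfl)) hy hl

lemma repSet_beta_mul {y : ℂ} (hy : y ∈ eisensteinSubring) (hy0 : y ≠ 0) (k : ℤ) :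
    repSet (eβ * y) k = List.cons 0 '' repSet y k := by
  ext l
  constructor
  · intro hl
    cases l with
    | nil => exact absurd hl.1.2.symm (mul_ne_zero beta_ne_zero hy0)
    | cons d l =>
      obtain rfl := eq_zero_of_cons_mem_repSet hy hl
      exact ⟨l, (cons_zero_mem_repSet_iff hy0).1 hl, rfl⟩
  · rintro ⟨l, hl, rfl⟩
    exact (cons_zero_mem_repSet_iff hy0).2 hl

lemma repSet_zero_subset (k : ℤ) : repSet 0 k ⊆ {[]} := by
  intro l hl
  induction l with
  | nil => rfl
  | cons d l ih =>
    obtain rfl : d = 0 := eq_zero_of_cons_mem_repSet (zero_mem _) (by rwa [mul_zero])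
    obtain ⟨⟨hdigits, heval⟩, hnorm, hweight⟩ := hl
    rw [List.forall_mem_cons] at hdigits
    rw [evalE_cons, zero_add, mul_eq_zero_iff_left beta_ne_zero] at heval
    rw [eNormalized_cons] at hnorm
    rw [eweight_cons_zero] at hweight
    exact absurd rfl (hnorm.2 (ih ⟨⟨hdigits.2, heval⟩, hnorm.1, hweight⟩))

lemma repSet_zero_zero : repSet 0 0 = {[]} :=
  (repSet_zero_subset 0).antisymm <| Set.singleton_subset_iff.2
    ⟨⟨by simp, rfl⟩, by simp [eNormalized], by simp [eweight]⟩

lemma add_beta_mul_ne_zero {y μ : ℂ} (hy : y ∈ eisensteinSubring) (hμ : μ ^ 6 = 1) :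
    μ + eβ * y ≠ 0 := by
  intro h
  have hcube := pow_three_eq_of_sub_eq_beta_mul (mem_eD_iff.2 (Or.inr hμ))
    (mem_eD_iff.2 (Or.inl rfl)) (neg_mem hy) (by linear_combination h)
  simp [ne_zero_of_pow_six hμ] at hcube

lemma repSet_add_beta_mul {y μ : ℂ} (hy : y ∈ eisensteinSubring) (hμ : μ ^ 6 = 1) (k : ℤ) :
    repSet (μ + eβ * y) k = List.cons μ '' repSet y (k - 1) ∪
      (List.cons (μ * ω) '' repSet (y - μ) (k - 1) ∪
        List.cons (μ * ω ^ 2) '' repSet (y + μ * ω ^ 2) (k - 1)) := by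
  have hω := isPrimitiveRoot_omega.pow_eq_one
  have split_ω : μ + eβ * y = μ * ω + eβ * (y - μ) := by grind [eβ]
  have split_ω_sq : μ + eβ * y = μ * ω ^ 2 + eβ * (y + μ * ω ^ 2) := by grind [eβ]
  have mem₁ (l) := cons_mem_repSet_iff (y := y) hμ (k := k) (l := l)
  have mem₂ (l) : μ * ω :: l ∈ repSet (μ + eβ * y) k ↔ l ∈ repSet (y - μ) (k - 1) := by
    rw [split_ω, cons_mem_repSet_iff (by grind)]
  have mem₃ (l) :
      μ * ω ^ 2 :: l ∈ repSet (μ + eβ * y) k ↔ l ∈ repSet (y + μ * ω ^ 2) (k - 1) := by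
    rw [split_ω_sq, cons_mem_repSet_iff (by grind)]
  ext l
  constructor
  · intro hl
    cases l with
    | nil => exact absurd hl.1.2.symm (add_beta_mul_ne_zero hy hμ)
    | cons d l =>
      rcases eq_or_eq_mul_omega_of_pow_three_eq
        (pow_three_eq_of_cons_mem_repSet (mem_eD_iff.2 (Or.inr hμ)) hy hl) with rfl | rfl | rfl
      · exact Or.inl ⟨l, (mem₁ l).1 hl, rfl⟩
      · exact Or.inr (Or.inl ⟨l, (mem₂ l).1 hl, rfl⟩)
      · exact Or.inr (Or.inr ⟨l, (mem₃ l).1 hl, rfl⟩)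
  · rintro (⟨l, hl, rfl⟩ | ⟨l, hl, rfl⟩ | ⟨l, hl, rfl⟩)
    · exact (mem₁ l).2 hl
    · exact (mem₂ l).2 hl
    · exact (mem₃ l).2 hl

lemma repSet_eq_empty_of_neg (x : ℂ) {k : ℤ} (hk : k < 0) : repSet x k = ∅ := by
  rw [Set.eq_empty_iff_forall_notMem]
  rintro l ⟨-, -, h⟩
  omega

/-- Splitting off digits of a known representation of `x` reaches `0` or lowers the weight. -/
lemma repSet_finite (x : ℂ) (k : ℤ) : (repSet x k).Finite := by
  suffices ∀ n : ℕ, ∀ k < (n : ℤ), ∀ x, (repSet x k).Finite from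
    this (k.toNat + 1) k (by omega) x
  intro n
  induction n with
  | zero => exact fun k hk x => by simp [repSet_eq_empty_of_neg x hk]
  | succ n ih =>
    intro k hk x
    have finite_evalE (l : List ℂ) (hl : ∀ d ∈ l, d ∈ eD) : (repSet (evalE l) k).Finite := by
      induction l with
      | nil => exact (Set.finite_singleton _).subset (repSet_zero_subset k)
      | cons d l ihl =>
        rw [List.forall_mem_cons] at hl
        rw [evalE_cons]
        rcases mem_eD_iff.1 hl.1 with rfl | hd
        · rw [zero_add]
          by_cases h0 : evalE l = 0
          · rw [h0, mul_zero, ← h0]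
            exact ihl hl.2
          · rw [repSet_beta_mul (evalE_mem hl.2) h0]
            exact (ihl hl.2).image _
        · have finite_pred (y) := ih (k - 1) (by omega) y
          rw [repSet_add_beta_mul (evalE_mem hl.2) hd]
          exact ((finite_pred _).image _).union
            (((finite_pred _).image _).union ((finite_pred _).image _))
    rcases (repSet x k).eq_empty_or_nonempty with h | ⟨l, ⟨hdigits, rfl⟩, -⟩
    · simp [h]
    · exact finite_evalE l hdigits

/-- The number of normalized representations of `x` of weight `k`. -/
def numRep (x : ℂ) (k : ℤ) : ℤ := (repSet x k).ncard

lemma numRep_of_neg (x : ℂ) {k : ℤ} (hk : k < 0) : numRep x k = 0 := by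
  simp [numRep, repSet_eq_empty_of_neg x hk]

lemma numRep_zero_zero : numRep 0 0 = 1 := by
  simp [numRep, repSet_zero_zero]

lemma numRep_eq_zero_iff {x : ℂ} {k : ℤ} : numRep x k = 0 ↔ repSet x k = ∅ := by
  rw [numRep, Nat.cast_eq_zero, Set.ncard_eq_zero (repSet_finite x k)]

lemma numRep_beta_mul {y : ℂ} (hy : y ∈ eisensteinSubring) (k : ℤ) :
    numRep (eβ * y) k = numRep y k := by
  by_cases hy0 : y = 0
  · rw [hy0, mul_zero]
  · rw [numRep, repSet_beta_mul hy hy0, Set.ncard_image_of_injective _ List.cons_injective, numRep]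

lemma disjoint_image_cons {α : Type*} {a b : α} (hab : a ≠ b) (s t : Set (List α)) :
    Disjoint (List.cons a '' s) (List.cons b '' t) := by
  rw [Set.disjoint_left]
  rintro _ ⟨l, -, rfl⟩ ⟨l', -, h⟩
  exact hab (List.cons.inj h).1.symm

lemma numRep_add_beta_mul {y μ : ℂ} (hy : y ∈ eisensteinSubring) (hμ : μ ^ 6 = 1) (k : ℤ) :
    numRep (μ + eβ * y) k =
      numRep y (k - 1) + numRep (y - μ) (k - 1) + numRep (y + μ * ω ^ 2) (k - 1) := by
  have hμ0 := ne_zero_of_pow_six hμ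
  have mul_omega_pow_ne {i j : ℕ} (hi : i < 3) (hj : j < 3) (hij : i ≠ j) :
      μ * ω ^ i ≠ μ * ω ^ j := fun h =>
    hij (isPrimitiveRoot_omega.pow_inj hi hj (mul_left_cancel₀ hμ0 h))
  have ne₁₂ : μ ≠ μ * ω := by simpa using mul_omega_pow_ne (i := 0) (j := 1)
  have ne₁₃ : μ ≠ μ * ω ^ 2 := by simpa using mul_omega_pow_ne (i := 0) (j := 2)
  have ne₂₃ : μ * ω ≠ μ * ω ^ 2 := by simpa using mul_omega_pow_ne (i := 1) (j := 2)
  have finite_cons (d y) := (repSet_finite y (k - 1)).image (List.cons d)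
  rw [numRep, repSet_add_beta_mul hy hμ,
    Set.ncard_union_eq (Set.disjoint_union_right.2
      ⟨disjoint_image_cons ne₁₂ _ _, disjoint_image_cons ne₁₃ _ _⟩)
      (finite_cons _ _) ((finite_cons _ _).union (finite_cons _ _)),
    Set.ncard_union_eq (disjoint_image_cons ne₂₃ _ _) (finite_cons _ _) (finite_cons _ _)]
  simp only [Set.ncard_image_of_injective _ List.cons_injective, numRep, Nat.cast_add, add_assoc]

/-! ### Multiplication by a unit -/

lemma evalE_map_mul (u : ℂ) (l : List ℂ) : evalE (l.map (u * ·)) = u * evalE l := by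
  induction l with
  | nil => simp [evalE]
  | cons d l ih =>
    rw [List.map_cons, evalE_cons, evalE_cons, ih]
    ring

lemma eweight_map_mul {u : ℂ} (hu : u ≠ 0) (l : List ℂ) :
    eweight (l.map (u * ·)) = eweight l := by
  simp [eweight, List.filter_map, Function.comp_def, hu]

lemma eNormalized_map_mul_iff {u : ℂ} (hu : u ≠ 0) {l : List ℂ} :
    eNormalized (l.map (u * ·)) ↔ eNormalized l := by
  simp [eNormalized, hu]

lemma mul_mem_eD_iff {u d : ℂ} (hu : u ^ 6 = 1) : u * d ∈ eD ↔ d ∈ eD := by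
  rw [mem_eD_iff, mem_eD_iff, mul_eq_zero_iff_left (ne_zero_of_pow_six hu), mul_pow, hu, one_mul]

lemma map_mul_mem_repSet_iff {u x : ℂ} (hu : u ^ 6 = 1) {k : ℤ} {l : List ℂ} :
    l.map (u * ·) ∈ repSet (u * x) k ↔ l ∈ repSet x k := by
  have hu0 := ne_zero_of_pow_six hu
  simp only [repSet, Set.mem_ofPred_eq, eIsRep, List.forall_mem_map, mul_mem_eD_iff hu,
    evalE_map_mul, mul_right_inj' hu0, eNormalized_map_mul_iff hu0, eweight_map_mul hu0]

lemma numRep_mul {u : ℂ} (hu : u ^ 6 = 1) (x : ℂ) (k : ℤ) : numRep (u * x) k = numRep x k := by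
  have hbij : Function.Bijective (List.map (u * ·)) :=
    (List.map_bijective_iff).2 (mulLeft_bijective₀ u (ne_zero_of_pow_six hu))
  have hpre : repSet x k = List.map (u * ·) ⁻¹' repSet (u * x) k :=
    Set.ext fun l => (map_mul_mem_repSet_iff hu).symm
  rw [numRep, numRep, hpre, Set.ncard, Set.ncard, Set.encard_preimage_of_bijective hbij]

/-! ### The row of counts around a number -/

/-- The row vector attached to `x` in weight `m`: its first entry counts the representations of `x`
of weight `m`, and its entry `j + 2` those of the neighbour `x - λ^j` of weight `m - 1`, because
completing the latter by one more digit would cost weight `1`. -/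
def countRow (x : ℂ) (m : ℤ) : Fin 7 → ℤ :=
  Matrix.vecCons (numRep x m) fun j : Fin 6 => numRep (x - lam ^ (j : ℕ)) (m - 1)

lemma vecMul_R7 (w : Fin 7 → ℤ) : w ᵥ* R7 = ![w 0, w 6, w 1, w 2, w 3, w 4, w 5] := by
  ext a
  fin_cases a <;> simp [Matrix.vecMul, dotProduct, Fin.sum_univ_succ, R7]

lemma vecMul_E0 (w : Fin 7 → ℤ) : w ᵥ* E0 = ![w 0, 0, 0, 0, 0, 0, 0] := by
  ext a
  fin_cases a <;> simp [Matrix.vecMul, dotProduct, Fin.sum_univ_succ, E0]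

lemma vecMul_E1 (w : Fin 7 → ℤ) :
    w ᵥ* E1 = ![w 0 + w 4 + 2 * w 5 + w 6, w 0, 0, w 4 + w 5, w 5, w 5 + w 6, 0] := by
  ext a
  fin_cases a <;> simp [Matrix.vecMul, dotProduct, Fin.sum_univ_succ, E1]
  ring

lemma R7_mul_transpose : R7 * R7ᵀ = 1 := by
  decide

lemma lam_pow_pow_six (i : ℕ) : (lam ^ i) ^ 6 = 1 := by
  rw [pow_right_comm, isPrimitiveRoot_lam.pow_eq_one, one_pow]

lemma countRow_lam_mul (x : ℂ) (m : ℤ) : countRow (lam * x) m = countRow x m ᵥ* R7 := by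
  have numRep_lam_mul (y : ℂ) (k : ℤ) : numRep (lam * y) k = numRep y k :=
    numRep_mul isPrimitiveRoot_lam.pow_eq_one y k
  have sub_lam_pow_succ (j : ℕ) :
      numRep (lam * x - lam ^ (j + 1)) (m - 1) = numRep (x - lam ^ j) (m - 1) := by
    rw [pow_succ', ← mul_sub, numRep_lam_mul]
  have sub_one : numRep (lam * x - lam ^ 0) (m - 1) = numRep (x - lam ^ 5) (m - 1) := by
    rw [pow_zero, ← isPrimitiveRoot_lam.pow_eq_one, sub_lam_pow_succ]
  rw [vecMul_R7]
  ext a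
  fin_cases a
  exacts [numRep_lam_mul x m, sub_one, sub_lam_pow_succ 0, sub_lam_pow_succ 1, sub_lam_pow_succ 2,
    sub_lam_pow_succ 3, sub_lam_pow_succ 4]

lemma countRow_lam_pow_mul (i : ℕ) (x : ℂ) (m : ℤ) :
    countRow (lam ^ i * x) m = countRow x m ᵥ* R7 ^ i := by
  induction i with
  | zero => simp
  | succ i ih => rw [pow_succ', mul_assoc, countRow_lam_mul, ih, Matrix.vecMul_vecMul, ← pow_succ]

lemma countRow_vecMul_transpose_pow (i : ℕ) (x : ℂ) (m : ℤ) :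
    countRow (lam ^ i * x) m ᵥ* R7ᵀ ^ i = countRow x m := by
  have hcomm : Commute R7 R7ᵀ := by
    rw [commute_iff_eq, R7_mul_transpose, mul_eq_one_comm.1 R7_mul_transpose]
  rw [countRow_lam_pow_mul, Matrix.vecMul_vecMul, ← hcomm.mul_pow, R7_mul_transpose, one_pow,
    Matrix.vecMul_one]

/-! ### Appending a block -/

section Transfer

variable {x : ℂ} {m : ℤ}

lemma numRep_eq_zero_of_countRow (h : ∀ k < m, countRow x k = 0) {k : ℤ} (hk : k < m) :
    numRep x k = 0 :=
  congrFun (h k hk) 0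

lemma numRep_sub_eq_zero_of_countRow (h : ∀ k < m, countRow x k = 0) {u : ℂ} (hu : u ^ 6 = 1)
    {k : ℤ} (hk : k < m - 1) : numRep (x - u) k = 0 := by
  obtain ⟨j, hj, rfl⟩ := isPrimitiveRoot_lam.eq_pow_of_pow_eq_one hu
  have := congrFun (h (k + 1) (by omega)) (Fin.succ ⟨j, hj⟩)
  simpa [countRow] using this

variable (hx : x ∈ eisensteinSubring) (h : ∀ k < m, countRow x k = 0)
include hx h

lemma numRep_add_beta_mul_of_countRow {u : ℂ} (hu : u ^ 6 = 1) {k : ℤ} (hk : k ≤ m) :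
    numRep (u + eβ * x) k = numRep (x - u) (k - 1) + numRep (x + u * ω ^ 2) (k - 1) := by
  rw [numRep_add_beta_mul hx hu, numRep_eq_zero_of_countRow h (by omega), zero_add]

lemma numRep_add_beta_mul_eq_zero {u : ℂ} (hu : u ^ 6 = 1) {k : ℤ} (hk : k < m) :
    numRep (u + eβ * x) k = 0 := by
  have hu' : (-(u * ω ^ 2)) ^ 6 = 1 := by grind [isPrimitiveRoot_omega.pow_eq_one]
  rw [numRep_add_beta_mul_of_countRow hx h hu hk.le, ← sub_neg_eq_add x,
    numRep_sub_eq_zero_of_countRow h hu (by omega),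
    numRep_sub_eq_zero_of_countRow h hu' (by omega), add_zero]

lemma numRep_add_beta_sq_mul_eq_zero {u : ℂ} (hu : u ^ 6 = 1) {k : ℤ} (hk : k ≤ m) :
    numRep (u + eβ * (eβ * x)) k = 0 := by
  have hu₁ : (-u) ^ 6 = 1 := by grind
  have hu₂ : (u * ω ^ 2) ^ 6 = 1 := by grind [isPrimitiveRoot_omega.pow_eq_one]
  rw [numRep_add_beta_mul (mul_mem beta_mem hx) hu, numRep_beta_mul hx,
    sub_eq_neg_add (eβ * x) u, add_comm (eβ * x) (u * ω ^ 2),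
    numRep_eq_zero_of_countRow h (by omega), numRep_add_beta_mul_eq_zero hx h hu₁ (by omega),
    numRep_add_beta_mul_eq_zero hx h hu₂ (by omega), add_zero, add_zero]

lemma countRow_beta_mul : countRow (eβ * x) m = countRow x m ᵥ* E0 := by
  have sub_lam_pow (j : ℕ) : numRep (eβ * x - lam ^ j) (m - 1) = 0 := by
    have hu : (-lam ^ j) ^ 6 = 1 := by rw [Even.neg_pow (by decide), lam_pow_pow_six]
    rw [sub_eq_neg_add, numRep_add_beta_mul_eq_zero hx h hu (by omega)]
  rw [vecMul_E0]
  ext a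
  fin_cases a
  exacts [numRep_beta_mul hx m, sub_lam_pow 0, sub_lam_pow 1, sub_lam_pow 2, sub_lam_pow 3,
    sub_lam_pow 4, sub_lam_pow 5]

lemma numRep_neg_one_add_beta_mul :
    numRep (-1 + eβ * x) m = numRep (x - lam ^ 3) (m - 1) + numRep (x - lam ^ 4) (m - 1) := by
  rw [numRep_add_beta_mul_of_countRow hx h (by norm_num) le_rfl, lam_pow_three, lam_pow_four]
  ring_nf

lemma numRep_omega_sq_add_beta_mul :
    numRep (ω ^ 2 + eβ * x) m = numRep (x - lam ^ 4) (m - 1) + numRep (x - lam ^ 5) (m - 1) := by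
  have hω := isPrimitiveRoot_omega.pow_eq_one
  rw [numRep_add_beta_mul_of_countRow hx h (by grind) le_rfl, lam_pow_four, lam_pow_five,
    show x + ω ^ 2 * ω ^ 2 = x - -ω by grind]

lemma numRep_one_add_beta_sq_mul :
    numRep (1 + eβ * (eβ * x)) (m + 1) =
      numRep x m + numRep (x - lam ^ 3) (m - 1) + 2 * numRep (x - lam ^ 4) (m - 1)
        + numRep (x - lam ^ 5) (m - 1) := by
  rw [numRep_add_beta_mul (mul_mem beta_mem hx) (one_pow 6), add_sub_cancel_right,
    numRep_beta_mul hx, one_mul, sub_eq_neg_add, add_comm (eβ * x),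
    numRep_neg_one_add_beta_mul hx h, numRep_omega_sq_add_beta_mul hx h]
  ring

/-- The least significant digit can be taken to be `-1`, as `2 = -1 - ω² β²`. -/
lemma numRep_two_add_beta_sq_mul :
    numRep (2 + eβ * (eβ * x)) m = numRep (x - lam ^ 4) (m - 1) := by
  have hω := isPrimitiveRoot_omega.pow_eq_one
  have hy : x - ω ^ 2 ∈ eisensteinSubring := sub_mem hx (pow_mem omega_mem 2)
  have quot₁ : eβ * (x - ω ^ 2) - -1 = ω ^ 2 + eβ * x := by grind [eβ, omega_sq]
  have quot₂ : eβ * (x - ω ^ 2) + -1 * ω ^ 2 = -1 + eβ * x := by grind [eβ, omega_sq]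
  rw [show 2 + eβ * (eβ * x) = -1 + eβ * (eβ * (x - ω ^ 2)) by grind [eβ, omega_sq],
    numRep_add_beta_mul (mul_mem beta_mem hy) (by norm_num), quot₁, quot₂, numRep_beta_mul hy,
    numRep_add_beta_mul_eq_zero hx h (by grind) (by omega),
    numRep_add_beta_mul_eq_zero hx h (by norm_num) (by omega), lam_pow_four, add_zero, add_zero]

lemma countRow_one_add_beta_sq_mul :
    countRow (1 + eβ * (eβ * x)) (m + 1) = countRow x m ᵥ* E1 := by
  have hω := isPrimitiveRoot_omega.pow_eq_one
  have hβ : eβ * x ∈ eisensteinSubring := mul_mem beta_mem hx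
  have entry₁ : numRep (1 + eβ * (eβ * x) - lam ^ 0) m = numRep x m := by
    rw [pow_zero, add_sub_cancel_left, numRep_beta_mul hβ, numRep_beta_mul hx]
  have entry₂ : numRep (1 + eβ * (eβ * x) - lam ^ 1) m = 0 := by
    rw [show 1 + eβ * (eβ * x) - lam ^ 1 = -ω + eβ * (eβ * x) by grind [omega_sq, lam_eq],
      numRep_add_beta_sq_mul_eq_zero hx h (by grind) le_rfl]
  have entry₃ : numRep (1 + eβ * (eβ * x) - lam ^ 2) m =
      numRep (x - lam ^ 3) (m - 1) + numRep (x - lam ^ 4) (m - 1) := by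
    rw [show 1 + eβ * (eβ * x) - lam ^ 2 = eβ * (-1 + eβ * x) by grind [lam_sq, eβ],
      numRep_beta_mul (add_mem (neg_mem (one_mem _)) hβ), numRep_neg_one_add_beta_mul hx h]
  have entry₄ : numRep (1 + eβ * (eβ * x) - lam ^ 3) m = numRep (x - lam ^ 4) (m - 1) := by
    rw [show 1 + eβ * (eβ * x) - lam ^ 3 = 2 + eβ * (eβ * x) by grind [lam_pow_three],
      numRep_two_add_beta_sq_mul hx h]
  have entry₅ : numRep (1 + eβ * (eβ * x) - lam ^ 4) m =
      numRep (x - lam ^ 4) (m - 1) + numRep (x - lam ^ 5) (m - 1) := by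
    rw [show 1 + eβ * (eβ * x) - lam ^ 4 = eβ * (ω ^ 2 + eβ * x) by grind [lam_pow_four, eβ],
      numRep_beta_mul (add_mem (pow_mem omega_mem 2) hβ), numRep_omega_sq_add_beta_mul hx h]
  have entry₆ : numRep (1 + eβ * (eβ * x) - lam ^ 5) m = 0 := by
    rw [show 1 + eβ * (eβ * x) - lam ^ 5 = -ω ^ 2 + eβ * (eβ * x) by grind [omega_sq, lam_pow_five],
      numRep_add_beta_sq_mul_eq_zero hx h (by grind) le_rfl]
  rw [vecMul_E1, countRow, add_sub_cancel_right]
  ext a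
  fin_cases a
  exacts [numRep_one_add_beta_sq_mul hx h, entry₁, entry₂, entry₃, entry₄, entry₅, entry₆]

/-- Dividing by `λ^i` reduces to the digit `1`; this is where the conjugation by `R` comes from. -/
lemma countRow_lam_pow_add_beta_sq_mul (i : ℕ) :
    countRow (lam ^ i + eβ * (eβ * x)) (m + 1) = countRow x m ᵥ* (R7ᵀ ^ i * E1 * R7 ^ i) := by
  obtain ⟨y, hy, rfl⟩ : ∃ y ∈ eisensteinSubring, lam ^ i * y = x := by
    refine ⟨(lam ^ i) ^ 5 * x, mul_mem (pow_mem
      (mem_eisensteinSubring_of_pow_six (lam_pow_pow_six i)) 5) hx, ?_⟩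
    rw [← mul_assoc, ← pow_succ', lam_pow_pow_six, one_mul]
  have hy_row : ∀ k < m, countRow y k = 0 := fun k hk => by
    rw [← countRow_vecMul_transpose_pow i, h k hk, Matrix.zero_vecMul]
  rw [← Matrix.vecMul_vecMul, ← Matrix.vecMul_vecMul, countRow_vecMul_transpose_pow,
    ← countRow_one_add_beta_sq_mul hy hy_row, ← countRow_lam_pow_mul]
  ring_nf

end Transfer

/-! ### Words of blocks -/

/-- The rows of counts of `x ∈ ℤ[ω]` vanish below weight `m`, and the row in weight `m` is `v`. This
is the invariant of the induction on the blocks; `v` itself is not required to be nonzero. -/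
structure IsLeadingRow (x : ℂ) (m : ℤ) (v : Fin 7 → ℤ) : Prop where
  mem : x ∈ eisensteinSubring
  countRow_of_lt : ∀ k < m, countRow x k = 0
  countRow_eq : countRow x m = v

namespace IsLeadingRow

lemma zero : IsLeadingRow 0 0 (e7 0) where
  mem := zero_mem _
  countRow_of_lt k hk := by
    ext a
    refine Fin.cases ?_ (fun j => ?_) a
    · exact numRep_of_neg 0 hk
    · exact numRep_of_neg _ (by omega)
  countRow_eq := by
    ext a
    refine Fin.cases numRep_zero_zero (fun j => ?_) a
    rw [show e7 0 j.succ = 0 by fin_cases j <;> rfl]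
    exact numRep_of_neg _ (by norm_num)

variable {x : ℂ} {m : ℤ} {v : Fin 7 → ℤ}

lemma beta_mul (h : IsLeadingRow x m v) : IsLeadingRow (eβ * x) m (v ᵥ* E0) where
  mem := mul_mem beta_mem h.mem
  countRow_of_lt k hk := by
    rw [countRow_beta_mul h.mem fun k' hk' => h.countRow_of_lt k' (hk'.trans hk),
      h.countRow_of_lt k hk, Matrix.zero_vecMul]
  countRow_eq := by rw [countRow_beta_mul h.mem h.countRow_of_lt, h.countRow_eq]

lemma lam_pow_add_beta_sq_mul (h : IsLeadingRow x m v) (i : ℕ) :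
    IsLeadingRow (lam ^ i + eβ * (eβ * x)) (m + 1) (v ᵥ* (R7ᵀ ^ i * E1 * R7 ^ i)) where
  mem := add_mem (mem_eisensteinSubring_of_pow_six (lam_pow_pow_six i))
    (mul_mem beta_mem (mul_mem beta_mem h.mem))
  countRow_of_lt k hk := by
    obtain ⟨k, rfl⟩ : ∃ k', k = k' + 1 := ⟨k - 1, by ring⟩
    have hk : k < m := by omega
    rw [countRow_lam_pow_add_beta_sq_mul h.mem fun k' hk' => h.countRow_of_lt k' (hk'.trans hk),
      h.countRow_of_lt k hk, Matrix.zero_vecMul]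
  countRow_eq := by
    rw [countRow_lam_pow_add_beta_sq_mul h.mem h.countRow_of_lt, h.countRow_eq]

end IsLeadingRow

lemma AmatE_zero : AmatE 0 = E0 := if_pos rfl

lemma AmatE_lam_pow {i : ℕ} (hi : i < 6) : AmatE (lam ^ i) = R7ᵀ ^ i * E1 * R7 ^ i := by
  have hne : lam ^ i ≠ 0 := ne_zero_of_pow_six (lam_pow_pow_six i)
  have eq_iff {j : ℕ} (hj : j < 6) : lam ^ i = lam ^ j ↔ i = j :=
    ⟨isPrimitiveRoot_lam.pow_inj hi hj, congrArg (lam ^ ·)⟩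
  have eq_one_iff : lam ^ i = 1 ↔ i = 0 := by rw [← pow_zero lam, eq_iff (by norm_num)]
  have eq_lam_iff : lam ^ i = -ω ^ 2 ↔ i = 1 := by
    rw [← lam_eq, ← eq_iff (by norm_num), pow_one]
  have eq_omega_iff : lam ^ i = ω ↔ i = 2 := by rw [← lam_sq, eq_iff (by norm_num)]
  have eq_neg_one_iff : lam ^ i = -1 ↔ i = 3 := by rw [← lam_pow_three, eq_iff (by norm_num)]
  have eq_omega_sq_iff : lam ^ i = ω ^ 2 ↔ i = 4 := by rw [← lam_pow_four, eq_iff (by norm_num)]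
  simp only [AmatE, hne, eq_one_iff, eq_lam_iff, eq_omega_iff, eq_neg_one_iff, eq_omega_sq_iff]
  interval_cases i <;> simp

lemma isLeadingRow_evalE_flatten (blocks : List (List ℂ))
    (hblocks : ∀ b ∈ blocks, b = [0] ∨ ∃ d ∈ eD, d ≠ 0 ∧ b = [0, d]) :
    IsLeadingRow (evalE blocks.flatten.reverse) (eweight blocks.flatten.reverse)
      (e7 0 ᵥ* (blocks.map fun b => AmatE (b.getLastD 0)).prod) := by
  induction blocks using List.reverseRecOn with
  | nil => simpa [evalE, eweight] using IsLeadingRow.zero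
  | append_singleton bs b ih =>
    have hbs := ih fun c hc => hblocks c (by simp [hc])
    rw [List.map_append, List.prod_append, ← Matrix.vecMul_vecMul]
    rcases hblocks b (by simp) with rfl | ⟨d, hd, hd0, rfl⟩
    · simpa [evalE_cons, eweight_cons_zero, AmatE_zero] using hbs.beta_mul
    · obtain ⟨i, hi, rfl⟩ := isPrimitiveRoot_lam.eq_pow_of_pow_eq_one
        ((mem_eD_iff.1 hd).resolve_left hd0)
      simpa [evalE_cons, eweight_cons_zero, eweight_cons_of_ne_zero hd0, AmatE_lam_pow hi] using
        hbs.lam_pow_add_beta_sq_mul i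

/-! ### Optimal representations -/

lemma repSet_eweight_nonempty {x : ℂ} {l : List ℂ} (hl : eIsRep x l) :
    (repSet x (eweight l)).Nonempty := by
  obtain ⟨hdigits, rfl⟩ := hl
  induction l with
  | nil => exact ⟨[], ⟨by simp, rfl⟩, by simp [eNormalized], rfl⟩
  | cons d l ih =>
    rw [List.forall_mem_cons] at hdigits
    obtain ⟨l', hl'⟩ := ih hdigits.2
    rw [evalE_cons]
    rcases mem_eD_iff.1 hdigits.1 with rfl | hd
    · rw [zero_add, eweight_cons_zero]
      by_cases h0 : evalE l = 0
      · rw [h0, mul_zero, ← h0]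
        exact ⟨l', hl'⟩
      · exact ⟨0 :: l', (cons_zero_mem_repSet_iff h0).2 hl'⟩
    · refine ⟨d :: l', (cons_mem_repSet_iff hd).2 ?_⟩
      rwa [eweight_cons_of_ne_zero (ne_zero_of_pow_six hd), Nat.cast_add, Nat.cast_one,
        add_sub_cancel_right]

lemma enumOpt_eq_numRep {x : ℂ} {w : List ℂ} (hw : eIsRep x w)
    (hmin : ∀ k < (eweight w : ℤ), numRep x k = 0) : (enumOpt x : ℤ) = numRep x (eweight w) := by
  have weight_le (l : List ℂ) (hl : eIsRep x l) : eweight w ≤ eweight l := by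
    by_contra! hlt
    exact (repSet_eweight_nonempty hl).ne_empty
      (numRep_eq_zero_iff.1 (hmin (eweight l) (by exact_mod_cast hlt)))
  have optimal_eq : {l | eOptimal x l} = repSet x (eweight w) := by
    ext l
    simp only [eOptimal, repSet, Set.mem_ofPred_eq, Nat.cast_inj]
    constructor
    · rintro ⟨hl, hnorm, hopt⟩
      exact ⟨hl, hnorm, (hopt w hw).antisymm (weight_le l hl)⟩
    · rintro ⟨hl, hnorm, hweight⟩
      exact ⟨hl, hnorm, hweight ▸ weight_le⟩
  rw [numRep, ← optimal_eq]
  rfl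

lemma e7_mul_mul_e7_transpose (M : Matrix (Fin 7) (Fin 7) ℤ) :
    (e7 * M * e7ᵀ) 0 0 = (e7 0 ᵥ* M) 0 := by
  simp [Matrix.mul_apply, Matrix.vecMul, dotProduct, Fin.sum_univ_succ, e7]

/-- If a representation of `x ∈ ℤ[ω]` (most significant digit first) is a
concatenation of blocks from `C = {0} ∪ {0d : d ∈ D, d ≠ 0}`, then the number
of optimal representations of `x` is `e A_{d_1} ⋯ A_{d_n} eᵀ`, where `d_ℓ` is
the last digit of the `ℓ`-th block. -/
theorem stmt16 (x : ℂ) (hx : x ∈ EisZ) (blocks : List (List ℂ))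
    (hblocks : ∀ b ∈ blocks, b = [0] ∨ ∃ d ∈ eD, d ≠ 0 ∧ b = [0, d])
    (hrep : eIsRep x blocks.flatten.reverse) :
    (enumOpt x : ℤ) =
      (e7 * (blocks.map (fun b => AmatE (b.getLastD 0))).prod * e7ᵀ) 0 0 := by
  have hrow := isLeadingRow_evalE_flatten blocks hblocks
  rw [hrep.2] at hrow
  have hmin : ∀ k < (eweight blocks.flatten.reverse : ℤ), numRep x k = 0 := fun k hk =>
    numRep_eq_zero_of_countRow hrow.countRow_of_lt hk
  rw [enumOpt_eq_numRep hrep hmin, e7_mul_mul_e7_transpose, ← hrow.countRow_eq]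
  rfl
end
end

section
/- Define row vectors t_N ∈ ℤ^{1×7} by t_0 = e and, for N ∈ ℕ, t_{N+1} = t_N A_1 R if N ≡ 0 (mod 3), and t_{N+1} = t_N A_{−1} R otherwise. Then for every N ∈ ℕ: t_N = (s_N, 2s_{N−3}, s_{N−3}, 2s_{N−3}, 0, s_{N−1}, 0) if N ≡ 0 (mod 3); t_N = (s_N, 0, s_{N−1}, 0, s_{N−2}, s_{N−2}, s_{N−2}) if N ≡ 1 (mod 3); and t_N = (s_N, s_{N−2}, s_{N−2}, s_{N−2}, 0, s_{N−1}, 0) if N ≡ 2 (mod 3); where s_M = ⌊(6·2^M + 1)/7⌋ for M ≥ 0 and s_M = 0 for M < 0. -/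
open Matrix

noncomputable section

/-- The row vectors `t_N`: `t_0 = e`, and `t_{N+1} = t_N A_1 R` if
`N ≡ 0 (mod 3)`, `t_{N+1} = t_N A_{-1} R` otherwise. -/
def tE : ℕ → Matrix (Fin 1) (Fin 7) ℤ
  | 0 => e7
  | (N + 1) => tE N * (if N % 3 = 0 then E1 else Em1) * R7

/-- The sequence `s_M` extended to integer indices: `s_M = ⌊(6·2^M + 1)/7⌋`
for `M ≥ 0` and `s_M = 0` for `M < 0`. -/
def sZ (M : ℤ) : ℕ := if M < 0 then 0 else (6 * 2 ^ M.toNat + 1) / 7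

/-!
Since `2 ^ M mod 7` has period 3, for `M ≥ 0` the floors satisfy `s_{M+1} = 2 s_M - 1` if `3 ∣ M`
and `s_{M+1} = 2 s_M + 1` otherwise; the second rule also holds at `M = -1`. Writing
`2 s_M = s_M + s_M` and expanding only the second summand gives `s_{M+1} = s_M + 2 s_{M-1}` for
`M ≢ 2 (mod 3)` and `s_{M+1} = s_M + 4 s_{M-2}` for `M ≡ 2 (mod 3)`. Multiplication by `A_1 R` or
`A_{-1} R` turns the claimed form of `t_N` into that of `t_{N+1}`: the last six coordinates match
at once, and the first one is the recurrence for `s_{N+1}`.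
-/

lemma two_pow_mod_seven (n : ℕ) : 2 ^ n % 7 = 2 ^ (n % 3) := by
  have h : 2 ^ n ≡ 2 ^ (n % 3) [MOD 7] := by
    rw [← ZMod.natCast_eq_natCast_iff]
    push_cast
    exact pow_eq_pow_mod n (by decide)
  have hlt : 2 ^ (n % 3) < 7 :=
    (Nat.pow_le_pow_right two_pos (Nat.le_of_lt_succ (n.mod_lt three_pos))).trans_lt (by norm_num)
  exact Nat.mod_eq_of_modEq h hlt

lemma sZ_natCast (n : ℕ) : sZ n = (6 * 2 ^ n + 1) / 7 := by
  simp [sZ]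

lemma sZ_of_neg {M : ℤ} (hM : M < 0) : sZ M = 0 :=
  if_pos hM

lemma sZ_add_one_add_one_of_emod_eq_zero {M : ℤ} (hM : 0 ≤ M) (h : M % 3 = 0) :
    sZ (M + 1) + 1 = 2 * sZ M := by
  lift M to ℕ using hM
  have hpow := two_pow_mod_seven M
  rw [show M % 3 = 0 by omega] at hpow
  rw [← Nat.cast_succ, sZ_natCast, sZ_natCast, pow_succ]
  omega

lemma sZ_add_one_of_emod_ne_zero {M : ℤ} (hM : -1 ≤ M) (h : M % 3 ≠ 0) :
    sZ (M + 1) = 2 * sZ M + 1 := by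
  obtain rfl | hM := hM.eq_or_lt
  · simp [sZ]
  lift M to ℕ using by omega
  have hpow := two_pow_mod_seven M
  rw [← Nat.cast_succ, sZ_natCast, sZ_natCast, pow_succ]
  obtain hmod | hmod : M % 3 = 1 ∨ M % 3 = 2 := by omega
  all_goals
    rw [hmod] at hpow
    omega

lemma sZ_add_one_of_emod_ne_two {M : ℤ} (h : M % 3 ≠ 2) :
    sZ (M + 1) = sZ M + 2 * sZ (M - 1) := by
  obtain hneg | hM := lt_or_ge M 0
  · rw [sZ_of_neg (by omega : M + 1 < 0), sZ_of_neg hneg, sZ_of_neg (by omega : M - 1 < 0)]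
  obtain h0 | h1 : M % 3 = 0 ∨ M % 3 = 1 := by omega
  · have hnext := sZ_add_one_add_one_of_emod_eq_zero hM h0
    have hprev := sZ_add_one_of_emod_ne_zero (M := M - 1) (by omega) (by omega)
    rw [sub_add_cancel] at hprev
    omega
  · have hnext := sZ_add_one_of_emod_ne_zero (M := M) (by omega) (by omega)
    have hprev := sZ_add_one_add_one_of_emod_eq_zero (M := M - 1) (by omega) (by omega)
    rw [sub_add_cancel] at hprev
    omega

lemma sZ_add_one_of_emod_eq_two {M : ℤ} (hM : 0 ≤ M) (h : M % 3 = 2) :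
    sZ (M + 1) = sZ M + 4 * sZ (M - 2) := by
  have hnext := sZ_add_one_of_emod_ne_zero (M := M) (by omega) (by omega)
  have hprev := sZ_add_one_of_emod_ne_two (M := M - 1) (by omega)
  have hprev' := sZ_add_one_of_emod_ne_zero (M := M - 1) (by omega) (by omega)
  rw [sub_add_cancel, sub_sub, one_add_one_eq_two] at hprev
  rw [sub_add_cancel] at hprev'
  omega

section RowAction

variable (a b c d x y z : ℤ)

lemma row_mul_R7 : !![a, b, c, d, x, y, z] * R7 = !![a, z, b, c, d, x, y] := by
  simp [R7]

lemma row_mul_R7_transpose : !![a, b, c, d, x, y, z] * R7ᵀ = !![a, c, d, x, y, z, b] := by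
  rw [← row_mul_R7, Matrix.mul_assoc, R7_mul_transpose, Matrix.mul_one]

lemma row_mul_E1 :
    !![a, b, c, d, x, y, z] * E1 = !![a + x + 2 * y + z, a, 0, x + y, y, y + z, 0] := by
  simp [E1]
  ring

lemma row_mul_Em1 :
    !![a, b, c, d, x, y, z] * Em1 = !![a + b + 2 * c + d, c, c + d, 0, a, 0, b + c] := by
  simp only [Em1, pow_succ, pow_zero, one_mul, ← Matrix.mul_assoc, row_mul_R7,
    row_mul_R7_transpose, row_mul_E1]

end RowAction

/-- Explicit form of the vectors `t_N` in terms of the sequence `s`. -/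
theorem stmt18 (N : ℕ) :
    (N % 3 = 0 →
      tE N = !![(sZ N : ℤ), 2 * (sZ ((N : ℤ) - 3) : ℤ), (sZ ((N : ℤ) - 3) : ℤ),
                2 * (sZ ((N : ℤ) - 3) : ℤ), 0, (sZ ((N : ℤ) - 1) : ℤ), 0]) ∧
    (N % 3 = 1 →
      tE N = !![(sZ N : ℤ), 0, (sZ ((N : ℤ) - 1) : ℤ), 0, (sZ ((N : ℤ) - 2) : ℤ),
                (sZ ((N : ℤ) - 2) : ℤ), (sZ ((N : ℤ) - 2) : ℤ)]) ∧
    (N % 3 = 2 →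
      tE N = !![(sZ N : ℤ), (sZ ((N : ℤ) - 2) : ℤ), (sZ ((N : ℤ) - 2) : ℤ),
                (sZ ((N : ℤ) - 2) : ℤ), 0, (sZ ((N : ℤ) - 1) : ℤ), 0]) := by
  induction N with
  | zero => simp [tE, e7, sZ]
  | succ N ih =>
    obtain ⟨ih0, ih1, ih2⟩ := ih
    have cast_sub_one : ((N + 1 : ℕ) : ℤ) - 1 = N := by push_cast; ring
    have cast_sub_two : ((N + 1 : ℕ) : ℤ) - 2 = (N : ℤ) - 1 := by push_cast; ring
    have cast_sub_three : ((N + 1 : ℕ) : ℤ) - 3 = (N : ℤ) - 2 := by push_cast; ring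
    rw [cast_sub_one, cast_sub_two, cast_sub_three, Nat.cast_succ]
    refine ⟨fun h => ?_, fun h => ?_, fun h => ?_⟩
    · rw [tE, if_neg (by omega), ih2 (by omega), row_mul_Em1, row_mul_R7,
        sZ_add_one_of_emod_eq_two (by omega) (by omega)]
      push_cast
      ring_nf
    · rw [tE, if_pos (by omega), ih0 (by omega), row_mul_E1, row_mul_R7,
        sZ_add_one_of_emod_ne_two (by omega)]
      push_cast
      ring_nf
    · rw [tE, if_neg (by omega), ih1 (by omega), row_mul_Em1, row_mul_R7,
        sZ_add_one_of_emod_ne_two (by omega)]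
      push_cast
      ring_nf
end
end
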